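/- arXiv:2201.05075 — 2 statements merged into one kernel-verified Lean document; each statement's English description precedes it below -/
import Mathlib

section
/- The Černý conjecture holds for completely reachable automata with two input letters: if A = ⟨Q, Σ⟩ is a completely reachable DFA with |Σ| = 2 and |Q| = n, then A has a reset word of length at most (n−1)². -/
open Finset

/-- The action of a word (list of letters) on a state, applying letters left to right. -/
def act {Q A : Type*} (δ : Q → A → Q) (q : Q) (w : List A) : Q := w.foldl δ q

/-- The image of a set of states under the action of a word. -/
def img {Q A : Type*} [DecidableEq Q] (δ : Q → A → Q) (P : Finset Q) (w : List A) : Finset Q :=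
  P.image (fun q => act δ q w)

/-- `excl δ w = Q \ Q·w`. -/
def excl {Q A : Type*} [Fintype Q] [DecidableEq Q] (δ : Q → A → Q) (w : List A) : Finset Q :=
  Finset.univ \ img δ Finset.univ w

/-- `dupl δ w` : the set of states with at least two preimages under the action of `w`. -/
def dupl {Q A : Type*} [Fintype Q] [DecidableEq Q] (δ : Q → A → Q) (w : List A) : Finset Q :=
  Finset.univ.filter (fun p => ∃ q₁ q₂ : Q, q₁ ≠ q₂ ∧ act δ q₁ w = p ∧ act δ q₂ w = p)

/-- A DFA is completely reachable if every nonempty subset of states is the image of the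
full state set under the action of some word. -/
def CompletelyReachable {Q A : Type*} [Fintype Q] [DecidableEq Q] (δ : Q → A → Q) : Prop :=
  ∀ P : Finset Q, P.Nonempty → ∃ w : List A, img δ Finset.univ w = P

namespace CernyBin

open Classical in
/-- Moore-type bound: distinguishable states are distinguished by a short word. -/
theorem moore {Q A : Type*} [Fintype Q] (δ : Q → A → Q) (E : Setoid Q) (r : ℕ)
    (hr : r ≤ Nat.card (Quotient E)) (x y : Q)
    (hxy : ∃ u, ¬ E (act δ x u) (act δ y u)) :
    ∃ u : List A, u.length ≤ Fintype.card Q - r ∧ ¬ E (act δ x u) (act δ y u) := by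
  let R : ℕ → Setoid Q := fun i =>
    { r := fun x y => ∀ u : List A, u.length ≤ i → E (act δ x u) (act δ y u)
      iseqv := ⟨fun x u _ => E.refl _, fun h u hu => E.symm (h u hu),
        fun h1 h2 u hu => E.trans (h1 u hu) (h2 u hu)⟩ }
  have Rdef : ∀ i x y, R i x y ↔ ∀ u : List A, u.length ≤ i → E (act δ x u) (act δ y u) :=
    fun i x y => Iff.rfl
  have Rmono : ∀ i j, i ≤ j → ∀ x y, R j x y → R i x y := by
    intro i j hij x y h u hu
    exact h u (hu.trans hij)
  have Rstep : ∀ i x y, R (i+1) x y → ∀ c, R i (δ x c) (δ y c) := by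
    intro i x y h c u hu
    exact h (c :: u) (by simpa using hu)
  have Rstep' : ∀ i x y, R 0 x y → (∀ c, R i (δ x c) (δ y c)) → R (i+1) x y := by
    intro i x y h0 h u hu
    cases u with
    | nil => exact h0 [] (by simp)
    | cons c u => exact h c u (by simpa using hu)
  have stable : ∀ i, (∀ x y, R i x y → R (i+1) x y) → ∀ j x y, R i x y → R j x y := by
    intro i hi j
    induction j with
    | zero => intro x y h; exact Rmono 0 i (Nat.zero_le _) x y h
    | succ j ih =>
      intro x y h
      exact Rstep' j x y (Rmono 0 i (Nat.zero_le _) x y h)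
        (fun c => ih _ _ (Rstep i x y (hi x y h) c))
  have main : ∀ i, r + i ≤ Nat.card (Quotient (R i)) ∨ ∀ j x y, R i x y → R j x y := by
    intro i
    induction i with
    | zero =>
      left
      have : R 0 = E := by
        ext x y
        rw [Rdef]
        constructor
        · intro h; exact h [] (by simp)
        · intro h u hu
          have : u = [] := List.length_eq_zero_iff.mp (by omega)
          subst this; exact h
      rw [this]; simpa using hr
    | succ i ih =>
      rcases ih with ih | ih
      · by_cases hs : ∀ x y, R i x y → R (i+1) x y
        · right
          intro j x y h
          exact stable i hs j x y (Rmono i (i+1) (by omega) x y h)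
        · left
          push Not at hs
          obtain ⟨x, y, h1, h2⟩ := hs
          let f : Quotient (R (i+1)) → Quotient (R i) :=
            Quotient.map' id (fun a b hab => Rmono i (i+1) (by omega) a b hab)
          have fs : Function.Surjective f := by
            intro q
            induction q using Quotient.inductionOn' with
            | h a => exact ⟨Quotient.mk (R (i+1)) a, rfl⟩
          have hne : ¬ Function.Injective f := by
            intro hinj
            apply h2
            have : f (Quotient.mk (R (i+1)) x) = f (Quotient.mk (R (i+1)) y) := Quotient.sound' h1
            exact Quotient.exact' (hinj this)
          have hlt : Nat.card (Quotient (R i)) < Nat.card (Quotient (R (i+1))) := by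
            rw [Nat.card_eq_fintype_card, Nat.card_eq_fintype_card]
            exact Fintype.card_lt_of_surjective_not_injective f fs hne
          omega
      · right
        intro j x y h
        exact ih j x y (Rmono i (i+1) (by omega) x y h)
  by_contra hcon
  push Not at hcon
  have hR : R (Fintype.card Q - r) x y := fun u hu => hcon u hu
  obtain ⟨u, hu⟩ := hxy
  rcases main (Fintype.card Q - r) with hm | hm
  · have hq : Fintype.card Q ≤ Fintype.card (Quotient (R (Fintype.card Q - r))) := by
      rw [← Nat.card_eq_fintype_card]; rw [Nat.card_eq_fintype_card] at *; omega
    have hbij : Function.Bijective (Quotient.mk (R (Fintype.card Q - r))) := by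
      rw [Fintype.bijective_iff_surjective_and_card]
      refine ⟨Quotient.mk_surjective, le_antisymm hq ?_⟩
      exact Fintype.card_le_of_surjective _ Quotient.mk_surjective
    have : x = y := hbij.1 (Quotient.sound hR)
    subst this
    exact hu (E.refl _)
  · exact hu (hm u.length x y hR u le_rfl)

/-- Preimage of a set under a word. -/
def pre {Q A : Type*} [Fintype Q] [DecidableEq Q] (δ : Q → A → Q) (S : Finset Q) (w : List A) :
    Finset Q := Finset.univ.filter (fun q => act δ q w ∈ S)

theorem mem_pre {Q A : Type*} [Fintype Q] [DecidableEq Q] (δ : Q → A → Q) (S : Finset Q)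
    (w : List A) (q : Q) : q ∈ pre δ S w ↔ act δ q w ∈ S := by
  simp [pre]

theorem pre_nil {Q A : Type*} [Fintype Q] [DecidableEq Q] (δ : Q → A → Q) (S : Finset Q) :
    pre δ S [] = S := by
  ext q; rw [mem_pre]; rfl

theorem act_append {Q A : Type*} (δ : Q → A → Q) (q : Q) (u v : List A) :
    act δ q (u ++ v) = act δ (act δ q u) v := by
  simp [act]

theorem act_rep {Q A : Type*} (δ : Q → A → Q) (b : A) (k : ℕ) : ∀ q : Q,
    act δ q (List.replicate k b) = (fun q => δ q b)^[k] q := by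
  induction k with
  | zero => intro q; rfl
  | succ k ih =>
    intro q
    rw [List.replicate_succ, Function.iterate_succ_apply]
    exact ih (δ q b)

theorem card_pre_bij {Q A : Type*} [Fintype Q] [DecidableEq Q] (δ : Q → A → Q) (b : A)
    (hb : Function.Bijective (fun q => δ q b)) (T : Finset Q) :
    (Finset.univ.filter (fun q => δ q b ∈ T)).card = T.card := by
  apply Finset.card_bij (fun q _ => δ q b)
  · intro q hq; simpa using hq
  · intro x _ y _ h; exact hb.1 h
  · intro y hy
    obtain ⟨x, hx⟩ := hb.2 y
    exact ⟨x, by simpa using (show δ x b ∈ T from (show δ x b = y from hx) ▸ hy), hx⟩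

theorem extend {Q A : Type*} [Fintype Q] [DecidableEq Q] (δ : Q → A → Q) (a b : A)
    (hab : ∀ c, c = a ∨ c = b)
    (hb : Function.Bijective (fun q => δ q b))
    (htr : ∀ x y : Q, ∃ k, (fun q => δ q b)^[k] x = y)
    (d e : Q)
    (hcount : ∀ T : Finset Q, (Finset.univ.filter (fun q => δ q a ∈ T)).card
      + (if e ∈ T then 1 else 0) = T.card + (if d ∈ T then 1 else 0))
    (hsync : ∃ (w : List A) (q : Q), ∀ x, act δ x w = q)
    (S : Finset Q) (hS : S.Nonempty) (hS' : S ≠ Finset.univ) :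
    ∃ w : List A, w.length ≤ Fintype.card Q ∧ S.card < (pre δ S w).card := by
  classical
  set β : Q → Q := fun q => δ q b with hβ
  -- the period
  have hcomm : ∀ (i j : ℕ) (x : Q), β^[i] (β^[j] x) = β^[j] (β^[i] x) := by
    intro i j x
    rw [← Function.iterate_add_apply, ← Function.iterate_add_apply, add_comm]
  have hper : ∃ r, 0 < r ∧ ∀ x, β^[r] x ∈ S ↔ x ∈ S := by
    obtain ⟨x0, _⟩ := hS
    obtain ⟨k, hk⟩ := htr (β x0) x0
    refine ⟨k+1, by omega, fun x => ?_⟩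
    obtain ⟨l, hl⟩ := htr x0 x
    have : β^[k+1] x = x := by
      rw [← hl, hcomm, Function.iterate_succ_apply, hk]
    rw [this]
  let r := Nat.find hper
  obtain ⟨hr0, hrS⟩ : 0 < r ∧ ∀ x, β^[r] x ∈ S ↔ x ∈ S := Nat.find_spec hper
  have hrmin : ∀ m, 0 < m → m < r → ¬ ∀ x, β^[m] x ∈ S ↔ x ∈ S := by
    intro m h0 hm hh
    exact Nat.find_min hper hm ⟨h0, hh⟩
  let E : Setoid Q :=
    { r := fun x y => ∀ j, β^[j] x ∈ S ↔ β^[j] y ∈ S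
      iseqv := ⟨fun x j => Iff.rfl, fun h j => (h j).symm, fun h1 h2 j => (h1 j).trans (h2 j)⟩ }
  have hEcard : r ≤ Nat.card (Quotient E) := by
    obtain ⟨x0, _⟩ := hS
    have key : ∀ i j, i < j → j < r → ¬ E (β^[i] x0) (β^[j] x0) := by
      intro i j hij hj hE
      apply hrmin (j - i) (by omega) (by omega)
      intro x
      obtain ⟨k, hk⟩ := htr (β^[i] x0) x
      have h1 := hE k
      have h2 : β^[k] (β^[j] x0) = β^[j-i] x := by
        rw [← hk, hcomm (j-i) k, ← Function.iterate_add_apply β (j-i) i, Nat.sub_add_cancel hij.le]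
      rw [hk, h2] at h1
      exact h1.symm
    let f : Fin r → Quotient E := fun i => Quotient.mk E (β^[i] x0)
    have hf : Function.Injective f := by
      intro i j hij
      have hE : E (β^[i] x0) (β^[j] x0) := Quotient.exact hij
      rcases lt_trichotomy i.1 j.1 with h | h | h
      · exact absurd hE (key _ _ h j.2)
      · exact Fin.ext h
      · exact absurd (E.symm hE) (key _ _ h i.2)
    have := Nat.card_le_card_of_injective f hf
    simpa using this
  have hmod : ∀ (k j : ℕ) (x : Q), β^[j + r * k] x ∈ S ↔ β^[j] x ∈ S := by
    intro k
    induction k with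
    | zero => intro j x; simp
    | succ k ih =>
      intro j x
      rw [← ih j x, show j + r * (k+1) = r + (j + r * k) by ring, Function.iterate_add_apply, hrS]
  -- letters and counts
  have hcons : ∀ (c : A) (w : List A), pre δ S (c :: w)
      = Finset.univ.filter (fun q => δ q c ∈ pre δ S w) := by
    intro c w; ext q; rw [mem_pre]; simp only [Finset.mem_filter, Finset.mem_univ, true_and, mem_pre]; rfl
  have hdist : ∃ u, ¬ E (act δ d u) (act δ e u) := by
    by_contra hcon
    push Not at hcon
    have hall : ∀ w : List A, (pre δ S w).card = S.card := by
      intro w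
      induction w with
      | nil => rw [pre_nil]
      | cons c w ih =>
        rw [hcons]
        rcases hab c with rfl | rfl
        · have h1 := hcount (pre δ S w)
          have h2 : e ∈ pre δ S w ↔ d ∈ pre δ S w := by
            have := hcon w 0
            simp only [Function.iterate_zero, id] at this
            simp [pre, this]
          simp only [h2] at h1
          omega
        · rw [card_pre_bij δ c hb, ih]
    obtain ⟨w, q, hw⟩ := hsync
    have h1 := hall w
    by_cases hq : q ∈ S
    · have : pre δ S w = Finset.univ := by ext x; simp [pre, hw, hq]
      rw [this] at h1
      exact hS' ((Finset.card_eq_iff_eq_univ S).mp (by rw [← h1, Finset.card_univ]))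
    · have : pre δ S w = ∅ := by ext x; simp [pre, hw, hq]
      rw [this] at h1
      have := hS.card_pos
      simp at h1; omega
  obtain ⟨u, hulen, hu⟩ := moore δ E r hEcard d e hdist
  obtain ⟨j, hjr, hj⟩ : ∃ j, j < r ∧ ¬ (β^[j] (act δ d u) ∈ S ↔ β^[j] (act δ e u) ∈ S) := by
    have : ¬ ∀ j, β^[j] (act δ d u) ∈ S ↔ β^[j] (act δ e u) ∈ S := hu
    push Not at this
    obtain ⟨j, hj⟩ := this
    refine ⟨j % r, Nat.mod_lt _ hr0, ?_⟩
    intro hh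
    rw [← hmod (j / r), ← hmod (j/r) (j % r) (act δ e u), Nat.mod_add_div] at hh
    tauto
  -- averaging
  let cnt : Q → ℕ := fun y => ((Finset.range r).filter (fun j => β^[j] y ∈ S)).card
  have hcnt1 : ∀ y, cnt (β y) = cnt y := by
    intro y
    have e1 : cnt (β y) = ∑ j ∈ Finset.range r, if β^[j+1] y ∈ S then 1 else 0 := by
      simp only [cnt, Finset.card_filter]; rfl
    have e2 : cnt y = ∑ j ∈ Finset.range r, if β^[j] y ∈ S then 1 else 0 := by
      simp only [cnt, Finset.card_filter]
    have e3 := Finset.sum_range_succ (fun j => if β^[j] y ∈ S then 1 else 0) r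
    have e4 := Finset.sum_range_succ' (fun j => if β^[j] y ∈ S then 1 else 0) r
    have e5 : (if β^[r] y ∈ S then 1 else 0) = (if β^[0] y ∈ S then 1 else 0) :=
      if_congr (hrS y) rfl rfl
    rw [e1, e2]
    omega
  have hcntk : ∀ k y, cnt (β^[k] y) = cnt y := by
    intro k
    induction k with
    | zero => intro y; rfl
    | succ k ih => intro y; rw [Function.iterate_succ_apply, ih, hcnt1]
  have hcnt : ∀ x y, cnt x = cnt y := by
    intro x y
    obtain ⟨k, hk⟩ := htr x y
    rw [← hk, hcntk]
  have hpresum : ∀ v : List A, ∑ j ∈ Finset.range r, (pre δ S (v ++ List.replicate j b)).card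
      = ∑ x : Q, cnt (act δ x v) := by
    intro v
    simp only [pre, cnt, Finset.card_filter, act_append, act_rep]
    rw [Finset.sum_comm]
  have hrot : ∀ j, (pre δ S (List.replicate j b)).card = S.card := by
    intro j
    induction j with
    | zero => rw [List.replicate_zero, pre_nil]
    | succ j ih => rw [List.replicate_succ, hcons, card_pre_bij δ b hb, ih]
  have havg : ∀ v : List A, ∑ j ∈ Finset.range r, (pre δ S (v ++ List.replicate j b)).card
      = ∑ j ∈ Finset.range r, S.card := by
    intro v
    rw [hpresum]
    have h0 := hpresum []
    simp only [List.nil_append, hrot] at h0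
    rw [h0]
    exact Finset.sum_congr rfl (fun x _ => hcnt _ _)
  have hfin : ∀ v : List A, v.length ≤ Fintype.card Q - r + 1 →
      (pre δ S (v ++ List.replicate j b)).card ≠ S.card →
      ∃ w : List A, w.length ≤ Fintype.card Q ∧ S.card < (pre δ S w).card := by
    intro v hv hne
    have hrn : r ≤ Fintype.card Q := by
      refine hEcard.trans ?_
      rw [Nat.card_eq_fintype_card]
      exact Fintype.card_le_of_surjective _ Quotient.mk_surjective
    by_contra hcon
    push Not at hcon
    have hle : ∀ i ∈ Finset.range r, (pre δ S (v ++ List.replicate i b)).card ≤ S.card := by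
      intro i hi
      apply hcon
      have := Finset.mem_range.mp hi
      simp only [List.length_append, List.length_replicate]
      omega
    have := (Finset.sum_eq_sum_iff_of_le hle).mp (havg v) j (Finset.mem_range.mpr hjr)
    exact hne this
  by_cases hne : (pre δ S (u ++ List.replicate j b)).card = S.card
  · apply hfin (a :: u) (by simpa using hulen)
    rw [List.cons_append, hcons]
    have h1 := hcount (pre δ S (u ++ List.replicate j b))
    have hd : d ∈ pre δ S (u ++ List.replicate j b) ↔ β^[j] (act δ d u) ∈ S := by
      simp [pre, act_append, act_rep, hβ]
    have he : e ∈ pre δ S (u ++ List.replicate j b) ↔ β^[j] (act δ e u) ∈ S := by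
      simp [pre, act_append, act_rep, hβ]
    rw [← hd, ← he] at hj
    intro hh
    rw [hh, hne] at h1
    by_cases c1 : d ∈ pre δ S (u ++ List.replicate j b) <;>
      by_cases c2 : e ∈ pre δ S (u ++ List.replicate j b) <;> simp [c1, c2] at h1 hj
  · exact hfin u (by omega) hne

theorem img_cons {Q A : Type*} [DecidableEq Q] (δ : Q → A → Q) (P : Finset Q)
    (c : A) (w : List A) : img δ P (c :: w) = img δ (P.image (fun q => δ q c)) w := by
  unfold img; rw [Finset.image_image]; rfl

theorem img_append {Q A : Type*} [DecidableEq Q] (δ : Q → A → Q) (P : Finset Q)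
    (u w : List A) : img δ P (u ++ w) = img δ (img δ P u) w := by
  unfold img; rw [Finset.image_image]; congr 1; ext q; simp [act_append]

theorem img_bij {Q A : Type*} [Fintype Q] [DecidableEq Q] (δ : Q → A → Q) (b : A)
    (hb : Function.Bijective (fun q => δ q b)) (k : ℕ) :
    img δ Finset.univ (List.replicate k b) = Finset.univ := by
  unfold img
  simp only [act_rep]
  exact Finset.image_univ_of_surjective (hb.2.iterate k)

theorem hcount_of {Q A : Type*} [Fintype Q] [DecidableEq Q] (δ : Q → A → Q) (a : A)
    (p q e : Q) (hpq : p ≠ q) (hd : δ p a = δ q a)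
    (he : Finset.univ.image (fun q => δ q a) = Finset.univ.erase e) (T : Finset Q) :
    (Finset.univ.filter (fun q => δ q a ∈ T)).card
      + (if e ∈ T then 1 else 0) = T.card + (if δ p a ∈ T then 1 else 0) := by
  have him : (Finset.univ.erase p).image (fun q => δ q a) = Finset.univ.erase e := by
    rw [← he]
    ext y
    simp only [Finset.mem_image, Finset.mem_erase, Finset.mem_univ, and_true, true_and]
    constructor
    · rintro ⟨x, _, rfl⟩; exact ⟨x, rfl⟩
    · rintro ⟨x, rfl⟩
      by_cases hx : x = p
      · subst hx; exact ⟨q, hpq.symm, hd.symm⟩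
      · exact ⟨x, hx, rfl⟩
  have hinj : Set.InjOn (fun q => δ q a) (Finset.univ.erase p : Finset Q) := by
    apply Finset.card_image_iff.mp
    rw [him, Finset.card_erase_of_mem (Finset.mem_univ _),
      Finset.card_erase_of_mem (Finset.mem_univ _)]
  have hbij : ((Finset.univ.filter (fun q => δ q a ∈ T)).erase p).card = (T.erase e).card := by
    apply Finset.card_bij (fun q _ => δ q a)
    · intro x hx
      have hx' : δ x a ∈ Finset.univ.erase e := by
        rw [← he]; exact Finset.mem_image_of_mem (fun q => δ q a) (Finset.mem_univ x)
      simp only [Finset.mem_erase, Finset.mem_filter, Finset.mem_univ] at hx hx' ⊢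
      tauto
    · intro x hx y hy hxy
      simp only [Finset.mem_erase] at hx hy
      exact hinj (by simpa using hx.1) (by simpa using hy.1) hxy
    · intro y hy
      simp only [Finset.mem_erase] at hy
      have : y ∈ (Finset.univ.erase p).image (fun q => δ q a) := by
        rw [him]; simpa using hy.1
      obtain ⟨x, hx, hxy⟩ := Finset.mem_image.mp this
      have hxy' : δ x a = y := hxy
      refine ⟨x, ?_, hxy'⟩
      simp only [Finset.mem_erase, Finset.mem_filter, Finset.mem_univ, true_and] at hx ⊢
      exact ⟨hx.1, hxy' ▸ hy.2⟩
  have h1 : (Finset.univ.filter (fun q => δ q a ∈ T)).card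
      = ((Finset.univ.filter (fun q => δ q a ∈ T)).erase p).card
        + (if δ p a ∈ T then 1 else 0) := by
    split_ifs with hc
    · exact (Finset.card_erase_add_one (by simpa using hc)).symm
    · rw [Finset.erase_eq_of_notMem (by simpa using hc)]; rfl
  have h2 : T.card = (T.erase e).card + (if e ∈ T then 1 else 0) := by
    split_ifs with hc
    · exact (Finset.card_erase_add_one hc).symm
    · rw [Finset.erase_eq_of_notMem hc]; rfl
  omega

/-- The circular, defect one case. -/
theorem circular_case {Q A : Type*} [Fintype Q] [DecidableEq Q] (δ : Q → A → Q) (a b : A)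
    (hab : ∀ c, c = a ∨ c = b)
    (hb : Function.Bijective (fun q => δ q b))
    (htr : ∀ x y : Q, ∃ k, (fun q => δ q b)^[k] x = y)
    (p q e : Q) (hpq : p ≠ q) (hd : δ p a = δ q a)
    (he : Finset.univ.image (fun q => δ q a) = Finset.univ.erase e)
    (hsync : ∃ (w : List A) (q : Q), ∀ x, act δ x w = q) :
    ∃ w : List A, (img δ Finset.univ w).card = 1 ∧ w.length ≤ (Fintype.card Q - 1) ^ 2 := by
  have hn : 2 ≤ Fintype.card Q := by
    have := Fintype.one_lt_card_iff.mpr ⟨p, q, hpq⟩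
    omega
  have hext := extend δ a b hab hb htr (δ p a) e (hcount_of δ a p q e hpq hd he) hsync
  have hchain : ∀ k, k + 2 ≤ Fintype.card Q → ∃ w : List A,
      w.length ≤ 1 + k * Fintype.card Q ∧ k + 2 ≤ (pre δ {δ p a} w).card := by
    intro k
    induction k with
    | zero =>
      intro _
      refine ⟨[a], by simp, ?_⟩
      have : ({p, q} : Finset Q) ⊆ pre δ {δ p a} [a] := by
        intro x hx
        simp only [Finset.mem_insert, Finset.mem_singleton] at hx
        rcases hx with rfl | rfl
        · simp [pre, act]
        · simp [pre, act, hd]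
      have h2 := Finset.card_le_card this
      rw [Finset.card_pair hpq] at h2
      simpa using h2
    | succ k ih =>
      intro hk
      obtain ⟨w, hw, hc⟩ := ih (by omega)
      by_cases hu : pre δ {δ p a} w = Finset.univ
      · refine ⟨w, by nlinarith, ?_⟩
        rw [hu, Finset.card_univ]; exact hk
      · obtain ⟨v, hv, hvc⟩ := hext (pre δ {δ p a} w) (Finset.card_pos.mp (by omega)) hu
        refine ⟨v ++ w, ?_, ?_⟩
        · rw [List.length_append, Nat.succ_mul]; omega
        · have : pre δ {δ p a} (v ++ w) = pre δ (pre δ {δ p a} w) v := by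
            ext x; simp [pre, act_append]
          rw [this]; omega
  obtain ⟨w, hw, hc⟩ := hchain (Fintype.card Q - 2) (by omega)
  refine ⟨w, ?_, ?_⟩
  · have hu : pre δ {δ p a} w = Finset.univ := by
      apply (Finset.card_eq_iff_eq_univ _).mp
      have := Finset.card_le_univ (pre δ {δ p a} w)
      omega
    rw [Finset.card_eq_one]
    refine ⟨δ p a, ?_⟩
    ext y
    simp only [img, Finset.mem_image, Finset.mem_univ, true_and, Finset.mem_singleton]
    have hx : ∀ x, act δ x w = δ p a := by
      intro x
      have : x ∈ pre δ {δ p a} w := by rw [hu]; exact Finset.mem_univ x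
      simpa [pre] using this
    constructor
    · rintro ⟨x, rfl⟩; exact hx x
    · rintro rfl; exact ⟨p, hx p⟩
  · obtain ⟨m, hm⟩ : ∃ m, Fintype.card Q = m + 2 := ⟨Fintype.card Q - 2, by omega⟩
    rw [hm] at hw ⊢
    simp only [Nat.add_sub_cancel, show m + 2 - 1 = m + 1 by omega] at hw ⊢
    nlinarith

/-- Every word either is a power of `b` or has a last occurrence of `a`. -/
theorem word_split {A : Type*} (a b : A) (hab : ∀ c, c = a ∨ c = b) (w : List A) :
    (∃ k, w = List.replicate k b) ∨ ∃ v k, w = v ++ (a :: List.replicate k b) := by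
  induction w with
  | nil => left; exact ⟨0, rfl⟩
  | cons c w ih =>
    rcases ih with ⟨k, rfl⟩ | ⟨v, k, rfl⟩
    · rcases hab c with rfl | rfl
      · right; exact ⟨[], k, rfl⟩
      · left; exact ⟨k+1, rfl⟩
    · right; exact ⟨c :: v, k, rfl⟩

theorem img_mono {Q A : Type*} [DecidableEq Q] (δ : Q → A → Q) {P P' : Finset Q} (h : P ⊆ P')
    (w : List A) : img δ P w ⊆ img δ P' w := Finset.image_subset_image h

theorem two_letters {Q A : Type*} [Fintype Q] [DecidableEq Q] (hn : 2 ≤ Fintype.card Q)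
    (δ : Q → A → Q) (h : CompletelyReachable δ) (a b : A) (hab : ∀ c, c = a ∨ c = b)
    (hb : Function.Bijective (fun q => δ q b)) :
    ∃ w : List A, (img δ Finset.univ w).card = 1 ∧ w.length ≤ (Fintype.card Q - 1) ^ 2 := by
  have hne : ∀ x : Q, (Finset.univ.erase x).Nonempty := by
    intro x
    rw [← Finset.card_pos, Finset.card_erase_of_mem (Finset.mem_univ _), Finset.card_univ]
    omega
  -- every co-singleton is `Q a b^k`
  have key : ∀ x : Q, ∃ k, Finset.univ.erase x ⊆
      img δ (Finset.univ.image (fun q => δ q a)) (List.replicate k b) := by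
    intro x
    obtain ⟨w, hw⟩ := h _ (hne x)
    rcases word_split a b hab w with ⟨k, rfl⟩ | ⟨v, k, rfl⟩
    · rw [img_bij δ b hb] at hw
      have : x ∈ Finset.univ.erase x := by rw [← hw]; exact Finset.mem_univ x
      simp at this
    · refine ⟨k, ?_⟩
      rw [← hw, img_append, img_cons]
      exact img_mono δ (Finset.image_subset_image (Finset.subset_univ _)) _
  have hnotinj : ¬ Function.Injective (fun q => δ q a) := by
    intro hinj
    have ha : Function.Bijective (fun q => δ q a) := Finite.injective_iff_bijective.mp hinj
    have hall : ∀ w : List A, img δ Finset.univ w = Finset.univ := by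
      intro w
      induction w with
      | nil => simp [img, act]
      | cons c w ih =>
        rw [img_cons]
        rcases hab c with rfl | rfl
        · rw [Finset.image_univ_of_surjective ha.2, ih]
        · rw [Finset.image_univ_of_surjective hb.2, ih]
    obtain ⟨x⟩ : Nonempty Q := Fintype.card_pos_iff.mp (by omega)
    obtain ⟨w, hw⟩ := h _ (hne x)
    rw [hall] at hw
    have : x ∈ Finset.univ.erase x := by rw [← hw]; exact Finset.mem_univ x
    simp at this
  have hnotsurj : ¬ Function.Surjective (fun q => δ q a) :=
    fun hs => hnotinj (Finite.injective_iff_surjective.mpr hs)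
  unfold Function.Surjective at hnotsurj
  push Not at hnotsurj
  obtain ⟨e, he⟩ := hnotsurj
  unfold Function.Injective at hnotinj
  push Not at hnotinj
  obtain ⟨p, q, hd, hpq⟩ := hnotinj
  have hsub : Finset.univ.image (fun q => δ q a) ⊆ Finset.univ.erase e := by
    intro y hy
    obtain ⟨x, _, hx⟩ := Finset.mem_image.mp hy
    simp only [Finset.mem_erase, Finset.mem_univ, and_true]
    rintro rfl
    exact he x hx
  have heq : Finset.univ.image (fun q => δ q a) = Finset.univ.erase e := by
    apply Finset.eq_of_subset_of_card_le hsub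
    obtain ⟨k, hk⟩ := key e
    exact (Finset.card_le_card hk).trans Finset.card_image_le
  have horb : ∀ x, ∃ k, (fun q => δ q b)^[k] e = x := by
    intro x
    obtain ⟨k, hk⟩ := key x
    refine ⟨k, ?_⟩
    by_contra hx
    have : (fun q => δ q b)^[k] e ∈ Finset.univ.erase x := by simpa using hx
    have h2 := hk this
    rw [heq] at h2
    obtain ⟨y, hy, hye⟩ := Finset.mem_image.mp h2
    rw [act_rep] at hye
    have := (hb.1.iterate k) hye
    simp [this] at hy
  have hfinper : ∃ m, (fun q => δ q b)^[m+1] e = e := by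
    obtain ⟨e', he'⟩ := hb.2 e
    obtain ⟨k, hk⟩ := horb e'
    refine ⟨k, ?_⟩
    rw [Function.iterate_succ_apply', hk]; exact he'
  have htr : ∀ x y : Q, ∃ k, (fun q => δ q b)^[k] x = y := by
    obtain ⟨m, hm⟩ := hfinper
    intro x y
    obtain ⟨i, rfl⟩ := horb x
    obtain ⟨j, rfl⟩ := horb y
    have hmul : ∀ t, (fun q => δ q b)^[(m+1) * t] e = e := by
      intro t
      rw [Function.iterate_mul]
      exact Function.iterate_fixed hm t
    refine ⟨j + ((m+1) * i - i), ?_⟩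
    have hle : i ≤ (m+1) * i := by nlinarith
    rw [← Function.iterate_add_apply,
      show j + ((m+1) * i - i) + i = j + (m+1) * i by omega, Function.iterate_add_apply, hmul]
  have hsync : ∃ (w : List A) (q : Q), ∀ x, act δ x w = q := by
    obtain ⟨w, hw⟩ := h {e} (Finset.singleton_nonempty e)
    refine ⟨w, e, fun x => ?_⟩
    have : act δ x w ∈ img δ Finset.univ w :=
      Finset.mem_image_of_mem (fun q => act δ q w) (Finset.mem_univ x)
    rw [hw] at this
    simpa using this
  exact circular_case δ a b hab hb htr p q e hpq hd heq hsync

theorem word_last {A : Type*} (w : List A) : w = [] ∨ ∃ v c, w = v ++ [c] := by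
  rcases List.eq_nil_or_concat w with h | ⟨v, c, h⟩
  · exact Or.inl h
  · exact Or.inr ⟨v, c, by simpa using h⟩

end CernyBin

/-- The Černý conjecture holds for completely reachable automata with two input letters. -/
theorem cerny_conjecture_binary_completelyReachable {Q A : Type*} [Fintype Q] [DecidableEq Q]
    [Nonempty Q] [Fintype A] (hA : Fintype.card A = 2)
    (δ : Q → A → Q) (h : CompletelyReachable δ) :
    ∃ w : List A, (img δ Finset.univ w).card = 1 ∧ w.length ≤ (Fintype.card Q - 1) ^ 2 := by
  classical
  have hpos : 0 < Fintype.card Q := Fintype.card_pos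
  by_cases hn : Fintype.card Q = 1
  · exact ⟨[], by simp [img, act, hn], by simp⟩
  have hn2 : 2 ≤ Fintype.card Q := by omega
  obtain ⟨a, b, hne, huniv⟩ := Finset.card_eq_two.mp (show (Finset.univ : Finset A).card = 2 from hA)
  have hab : ∀ c, c = a ∨ c = b := by
    intro c
    have : c ∈ (Finset.univ : Finset A) := Finset.mem_univ c
    rw [huniv] at this
    simpa using this
  by_cases hb : Function.Bijective (fun q => δ q b)
  · exact CernyBin.two_letters hn2 δ h a b hab hb
  by_cases ha : Function.Bijective (fun q => δ q a)
  · exact CernyBin.two_letters hn2 δ h b a (fun c => (hab c).symm) ha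
  -- both letters are not permutations: then there are two states
  have hmiss : ∀ c : A, ∃ y, ∀ x, δ x c ≠ y := by
    intro c
    by_contra hcon
    push Not at hcon
    have : Function.Bijective (fun q => δ q c) := Finite.surjective_iff_bijective.mp hcon
    rcases hab c with rfl | rfl
    · exact ha this
    · exact hb this
  choose m hm using hmiss
  -- every co-singleton is contained in the image of a letter, hence every state is some `m c`
  have hall : ∀ x : Q, ∃ c, m c = x := by
    intro x
    have hnx : (Finset.univ.erase x).Nonempty := by
      rw [← Finset.card_pos, Finset.card_erase_of_mem (Finset.mem_univ _), Finset.card_univ]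
      omega
    obtain ⟨w, hw⟩ := h _ hnx
    rcases CernyBin.word_last w with rfl | ⟨v, c, rfl⟩
    · have : x ∈ Finset.univ.erase x := by rw [← hw]; simp [img, act]
      simp at this
    · refine ⟨c, ?_⟩
      by_contra hx
      have : m c ∈ Finset.univ.erase x := by simpa using hx
      rw [← hw, CernyBin.img_append] at this
      obtain ⟨y, _, hy⟩ := Finset.mem_image.mp this
      exact hm c y hy
  have hle : Fintype.card Q ≤ 2 := by
    rw [← hA]; exact Fintype.card_le_of_surjective m hall
  refine ⟨[a], ?_, ?_⟩
  · have hsub : img δ Finset.univ [a] ⊆ Finset.univ.erase (m a) := by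
      intro y hy
      obtain ⟨x, _, hx⟩ := Finset.mem_image.mp hy
      simp only [Finset.mem_erase, Finset.mem_univ, and_true]
      rintro rfl
      exact hm a x hx
    have h1 := Finset.card_le_card hsub
    rw [Finset.card_erase_of_mem (Finset.mem_univ _), Finset.card_univ] at h1
    have h2 : 0 < (img δ Finset.univ [a]).card :=
      Finset.card_pos.mpr (Finset.univ_nonempty.image _)
    omega
  · have : Fintype.card Q = 2 := by omega
    simp [this]
end

section
/- Let A = ⟨Q, Σ⟩ be a completely reachable DFA with |Q| = n ≥ 2. Then there exists a word w ∈ Σ* of length at most n·(⌈n/2⌉ − 1) + 1 such that 2·|Q·w| ≤ n. -/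
open Finset

theorem act_append' {Q A : Type*} (δ : Q → A → Q) (q : Q) (u v : List A) :
    act δ q (u ++ v) = act δ (act δ q u) v := by
  simp [act]

theorem img_append' {Q A : Type*} [DecidableEq Q] (δ : Q → A → Q) (P : Finset Q) (u v : List A) :
    img δ P (u ++ v) = img δ (img δ P u) v := by
  simp only [img, Finset.image_image]
  congr 1
  funext q
  exact act_append' δ q u v

theorem card_img_append_le {Q A : Type*} [DecidableEq Q] (δ : Q → A → Q) (P : Finset Q)
    (u v : List A) : (img δ P (u ++ v)).card ≤ (img δ P u).card := by
  rw [img_append']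
  exact Finset.card_image_le

/-- Every state can be avoided by a word of length at most `n`. -/
theorem avoid_state {Q A : Type*} [Fintype Q] [DecidableEq Q]
    (δ : Q → A → Q) (hn : 2 ≤ Fintype.card Q) (h : CompletelyReachable δ) (q : Q) :
    ∃ u : List A, u.length ≤ Fintype.card Q ∧ q ∉ img δ Finset.univ u := by
  classical
  have hex : ∃ m : ℕ, ∃ u : List A, u.length = m ∧
      img δ Finset.univ u = Finset.univ.erase q := by
    obtain ⟨u, hu⟩ := h (Finset.univ.erase q) (by
      rw [← Finset.card_pos, Finset.card_erase_of_mem (Finset.mem_univ q), Finset.card_univ]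
      omega)
    exact ⟨_, u, rfl, hu⟩
  obtain ⟨u, hlen, hu⟩ := Nat.find_spec hex
  refine ⟨u, ?_, by rw [hu]; simp⟩
  have hmin : ∀ v : List A, img δ Finset.univ v = Finset.univ.erase q →
      u.length ≤ v.length := by
    intro v hv
    rw [hlen]
    exact Nat.find_min' hex ⟨v, rfl, hv⟩
  have hcode : ∀ i : Fin (u.length + 1), ∃ o : Option Q,
      img δ Finset.univ (u.take i) = o.elim Finset.univ (fun e => Finset.univ.erase e) := by
    intro i
    have h1 := card_img_append_le δ Finset.univ (u.take i) (u.drop i)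
    rw [List.take_append_drop, hu, Finset.card_erase_of_mem (Finset.mem_univ q)] at h1
    by_cases h2 : img δ Finset.univ (u.take i) = Finset.univ
    · exact ⟨none, h2⟩
    · obtain ⟨e, he⟩ : ∃ e, e ∉ img δ Finset.univ (u.take i) := by
        by_contra hc
        push Not at hc
        exact h2 (Finset.eq_univ_iff_forall.2 hc)
      refine ⟨some e, ?_⟩
      apply Finset.eq_of_subset_of_card_le
      · intro x hx
        refine Finset.mem_erase.2 ⟨?_, Finset.mem_univ x⟩
        rintro rfl
        exact he hx
      · simpa [Finset.card_erase_of_mem] using h1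
  choose f hf using hcode
  have key : ∀ i j : Fin (u.length + 1), f i = f j → j ≤ i := by
    intro i j hij
    have h1 : img δ Finset.univ (u.take i ++ u.drop j) = Finset.univ.erase q := by
      rw [img_append', hf i, hij, ← hf j, ← img_append', List.take_append_drop, hu]
    have h2 := hmin _ h1
    rw [List.length_append, List.length_take, List.length_drop] at h2
    have := i.2
    have := j.2
    rw [Fin.le_def]
    omega
  have hinj : Function.Injective f := fun i j hij =>
    le_antisymm (key j i hij.symm) (key i j hij)
  have := Fintype.card_le_of_injective f hinj
  simpa using this

theorem exists_unique_fiber {Q A : Type*} [Fintype Q] [DecidableEq Q]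
    (δ : Q → A → Q) (w : List A) (hw : Fintype.card Q < 2 * (img δ Finset.univ w).card) :
    ∃ q : Q, ∀ q', act δ q' w = act δ q w → q' = q := by
  by_contra hc
  push Not at hc
  have : (img δ Finset.univ w).card * 2 ≤ (Finset.univ : Finset Q).card := by
    rw [Nat.mul_comm]
    refine Finset.mul_card_image_le_card (f := fun q => act δ q w) Finset.univ 2 ?_
    intro p hp
    obtain ⟨q, -, rfl⟩ := Finset.mem_image.1 hp
    obtain ⟨q', hq, hne⟩ := hc q
    exact Finset.one_lt_card.2 ⟨q', by simp [hq], q, by simp, hne⟩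
  rw [Finset.card_univ] at this
  omega

theorem halving_aux {Q A : Type*} [Fintype Q] [DecidableEq Q]
    (δ : Q → A → Q) (hn : 2 ≤ Fintype.card Q) (h : CompletelyReachable δ) (k : ℕ) :
    ∃ w : List A, w.length ≤ Fintype.card Q * k + 1 ∧
      (2 * (img δ Finset.univ w).card ≤ Fintype.card Q ∨
        (img δ Finset.univ w).card + k + 1 ≤ Fintype.card Q) := by
  induction k with
  | zero =>
    by_contra hc
    push Not at hc
    have hl : ∀ a : A, img δ Finset.univ [a] = Finset.univ := by
      intro a
      have := (hc [a] (by simp)).2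
      apply Finset.eq_univ_of_card
      have := Finset.card_le_univ (img δ Finset.univ [a])
      omega
    have hall : ∀ w : List A, img δ Finset.univ w = Finset.univ := by
      intro w
      induction w with
      | nil => simp [img, act]
      | cons a w ih => rw [← List.singleton_append, img_append', hl, ih]
    obtain ⟨q⟩ : Nonempty Q := Fintype.card_pos_iff.1 (by omega)
    obtain ⟨w, hw⟩ := h {q} (by simp)
    rw [hall] at hw
    have := congrArg Finset.card hw
    rw [Finset.card_univ, Finset.card_singleton] at this
    omega
  | succ k ih =>
    obtain ⟨w, hl, hw⟩ := ih
    by_cases h2 : 2 * (img δ Finset.univ w).card ≤ Fintype.card Q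
    · exact ⟨w, by rw [Nat.mul_succ]; omega, Or.inl h2⟩
    · obtain ⟨q, hq⟩ := exists_unique_fiber δ w (by omega)
      obtain ⟨u, hu, hqu⟩ := avoid_state δ hn h q
      refine ⟨u ++ w, by rw [Nat.mul_succ, List.length_append]; omega, Or.inr ?_⟩
      have hsub : img δ Finset.univ (u ++ w) ⊆ (img δ Finset.univ w).erase (act δ q w) := by
        intro x hx
        rw [img_append', img, Finset.mem_image] at hx
        obtain ⟨y, hy, rfl⟩ := hx
        refine Finset.mem_erase.2 ⟨?_, Finset.mem_image_of_mem _ (Finset.mem_univ y)⟩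
        intro he
        rw [hq y he] at hy
        exact hqu hy
      have hc := Finset.card_le_card hsub
      have hm : act δ q w ∈ img δ Finset.univ w :=
        Finset.mem_image_of_mem (fun q => act δ q w) (Finset.mem_univ q)
      rw [Finset.card_erase_of_mem hm] at hc
      have := Finset.card_pos.2 ⟨_, hm⟩
      omega

/-- In a completely reachable DFA with n ≥ 2 states, there is a word of length at most
n·(⌈n/2⌉ − 1) + 1 whose image has size at most n/2. -/
theorem halving_word {Q A : Type*} [Fintype Q] [DecidableEq Q]
    (δ : Q → A → Q) (hn : 2 ≤ Fintype.card Q) (h : CompletelyReachable δ) :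
    ∃ w : List A, w.length ≤ Fintype.card Q * ((Fintype.card Q + 1) / 2 - 1) + 1 ∧
      2 * (img δ Finset.univ w).card ≤ Fintype.card Q := by
  obtain ⟨w, hl, hw⟩ := halving_aux δ hn h ((Fintype.card Q + 1) / 2 - 1)
  exact ⟨w, hl, by omega⟩
end
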